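/- arXiv:1709.08795 — 4 statements merged into one kernel-verified Lean document; each statement's English description precedes it below -/
import Mathlib

section
/- Let X be a random vector in ℝ^d whose distribution has an everywhere positive, twice continuously differentiable density p, and let g : ℝ^d → ℝ be twice continuously differentiable such that g·T_p and the Hessian ∇²g are integrable with respect to the distribution of X and the boundary terms in the double integration by parts vanish (for each pair of coordinates (j,k), the relevant products of g, p and their first partial derivatives tend to 0 as the corresponding coordinate tends to ±∞, for almost every value of the other coordinates). Then E[g(X)·T_p(X)] = E[∇²g(X)], an identity between d×d matrices. -/
/-!
Write `W = g ∂p - p ∂g`. Integrating by parts twice against a cutoff `φ` gives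
`∫ φ (g ∂_j∂_k p - p ∂_j∂_k g) = ∫ (∂_k φ · p ∂_j g - ∂_j φ · g ∂_k p)`; since
`∂_j g · ∂_k p` need not be integrable, the content is that the right-hand side tends to `0` as
`φ` exhausts the space.

This rests on a bound in one variable (`LineData`): if `p > 0`, the functions `g p''` and `p g''`
are integrable with `ε = ∫ (|g p''| + |p g''|)`, and `g p'`, `p g'` vanish at `±∞`, then
`|p g'| ≤ 2ε` and `|g p'| ≤ 3ε` everywhere. Indeed `W' = g p'' - p g''`, so `|W| ≤ ε`; if `p g'`
exceeded `2ε` at a point with `g ≥ 0`, both `p` and `g` would be increasing there, they would keep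
increasing forever because `∫ |g p''|` and `∫ |p g''|` are too small to stop them, and `p g'` would
not tend to `0`. The other sign patterns follow by `g ↦ -g` and by reflecting the line.

For `j ≠ k`, on almost every line in direction `j` the term `p ∂_j g` is thus bounded by the
integral over the line of `|g ∂_j² p| + |p ∂_j² g|`. With a product cutoff at scale `m`, `∂_k φ` is
`O(1/m)` and lives on `|x_k| ≥ m`, `|x_j| ≤ 2m`; integrating in `x_j` first
(`lintegral_weight_mul_line`) costs `O(m)`, which leaves a constant times the integral of
`|g ∂_j² p| + |p ∂_j² g|` over `|x_k| ≥ m`, a tail of a convergent integral. The term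
`g ∂_k p` is symmetric. For `j = k` the right-hand side is `-∫ ∂_j φ · W`, and `W` itself is bounded
by the part of the line integral over `|x_j| ≥ m`.
-/

open MeasureTheory Filter

/-- The second-order score function `T_p(x) = ∇²p(x)/p(x)` of a density `p` on `ℝ^d`,
entrywise: `T_p(x)_{jk} = (∂_j ∂_k p)(x) / p(x)`. -/
noncomputable def score2 {d : ℕ} (p : (Fin d → ℝ) → ℝ) (x : Fin d → ℝ) (j k : Fin d) : ℝ :=
  fderiv ℝ (fun y => fderiv ℝ p y (Pi.single k 1)) x (Pi.single j 1) / p x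

/-- The `(j,k)` entry of the Hessian `∇²g` of `g : ℝ^d → ℝ`. -/
noncomputable def hess {d : ℕ} (g : (Fin d → ℝ) → ℝ) (x : Fin d → ℝ) (j k : Fin d) : ℝ :=
  fderiv ℝ (fun y => fderiv ℝ g y (Pi.single k 1)) x (Pi.single j 1)

open scoped ENNReal

/-! ### The bound on a line -/

/-- Restriction of the data to a line: `p > 0` and `g` are `C²` functions on `ℝ` with first and
second derivatives `p₁, p₂` and `g₁, g₂`, the products `g p''` and `p g''` are integrable, and
`g p'`, `p g'` vanish at `±∞`. -/
structure LineData (p p₁ p₂ g g₁ g₂ : ℝ → ℝ) : Prop where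
  pos : ∀ t, 0 < p t
  dp : ∀ t, HasDerivAt p (p₁ t) t
  dp₁ : ∀ t, HasDerivAt p₁ (p₂ t) t
  cp₂ : Continuous p₂
  dg : ∀ t, HasDerivAt g (g₁ t) t
  dg₁ : ∀ t, HasDerivAt g₁ (g₂ t) t
  cg₂ : Continuous g₂
  int_gp : Integrable fun t => g t * p₂ t
  int_pg : Integrable fun t => p t * g₂ t
  gp_top : Tendsto (fun t => g t * p₁ t) atTop (nhds 0)
  gp_bot : Tendsto (fun t => g t * p₁ t) atBot (nhds 0)
  pg_top : Tendsto (fun t => p t * g₁ t) atTop (nhds 0)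
  pg_bot : Tendsto (fun t => p t * g₁ t) atBot (nhds 0)

namespace LineData

variable {p p₁ p₂ g g₁ g₂ : ℝ → ℝ}

lemma neg (h : LineData p p₁ p₂ g g₁ g₂) :
    LineData p p₁ p₂ (fun t => -g t) (fun t => -g₁ t) (fun t => -g₂ t) where
  pos := h.pos
  dp := h.dp
  dp₁ := h.dp₁
  cp₂ := h.cp₂
  dg t := (h.dg t).neg
  dg₁ t := (h.dg₁ t).neg
  cg₂ := h.cg₂.neg
  int_gp := by simpa using h.int_gp.neg
  int_pg := by simpa using h.int_pg.neg
  gp_top := by simpa using h.gp_top.neg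
  gp_bot := by simpa using h.gp_bot.neg
  pg_top := by simpa using h.pg_top.neg
  pg_bot := by simpa using h.pg_bot.neg

lemma reflect (h : LineData p p₁ p₂ g g₁ g₂) :
    LineData (fun t => p (-t)) (fun t => -p₁ (-t)) (fun t => p₂ (-t))
      (fun t => g (-t)) (fun t => -g₁ (-t)) (fun t => g₂ (-t)) where
  pos t := h.pos _
  dp t := ((h.dp (-t)).comp t (hasDerivAt_neg t)).congr_deriv (by simp)
  dp₁ t := ((h.dp₁ (-t)).comp t (hasDerivAt_neg t)).neg.congr_deriv (by simp)
  cp₂ := h.cp₂.comp continuous_neg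
  dg t := ((h.dg (-t)).comp t (hasDerivAt_neg t)).congr_deriv (by simp)
  dg₁ t := ((h.dg₁ (-t)).comp t (hasDerivAt_neg t)).neg.congr_deriv (by simp)
  cg₂ := h.cg₂.comp continuous_neg
  int_gp := h.int_gp.comp_neg
  int_pg := h.int_pg.comp_neg
  gp_top := by simpa using (h.gp_bot.comp tendsto_neg_atTop_atBot).neg
  gp_bot := by simpa using (h.gp_top.comp tendsto_neg_atBot_atTop).neg
  pg_top := by simpa using (h.pg_bot.comp tendsto_neg_atTop_atBot).neg
  pg_bot := by simpa using (h.pg_top.comp tendsto_neg_atBot_atTop).neg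

lemma int_abs (h : LineData p p₁ p₂ g g₁ g₂) :
    Integrable fun t => |g t * p₂ t| + |p t * g₂ t| := h.int_gp.abs.add h.int_pg.abs

lemma hasDerivAt_wronskian (h : LineData p p₁ p₂ g g₁ g₂) (t : ℝ) :
    HasDerivAt (fun t => g t * p₁ t - p t * g₁ t) (g t * p₂ t - p t * g₂ t) t := by
  have := ((h.dg t).mul (h.dp₁ t)).sub ((h.dp t).mul (h.dg₁ t))
  exact this.congr_deriv (by ring)

/-- The Wronskian `g p' - p g'` vanishes at both ends of the line and has derivative
`g p'' - p g''`, so it is controlled by the tail of the integral beyond `t`. -/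
lemma abs_wronskian_le (h : LineData p p₁ p₂ g g₁ g₂) {t m : ℝ} (hm : m ≤ |t|) :
    |g t * p₁ t - p t * g₁ t| ≤ ∫ s in {s | m ≤ |s|}, (|g s * p₂ s| + |p s * g₂ s|) := by
  have hi : Integrable (fun s => g s * p₂ s - p s * g₂ s) := h.int_gp.sub h.int_pg
  have key : ∀ S : Set ℝ, S ⊆ {s | m ≤ |s|} →
      |∫ s in S, (g s * p₂ s - p s * g₂ s)| ≤
        ∫ s in {s | m ≤ |s|}, (|g s * p₂ s| + |p s * g₂ s|) := by
    intro S hS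
    calc |∫ s in S, (g s * p₂ s - p s * g₂ s)|
        ≤ ∫ s in S, |g s * p₂ s - p s * g₂ s| := abs_integral_le_integral_abs
      _ ≤ ∫ s in S, (|g s * p₂ s| + |p s * g₂ s|) :=
          integral_mono hi.abs.integrableOn h.int_abs.integrableOn (fun s => abs_sub _ _)
      _ ≤ _ := setIntegral_mono_set h.int_abs.integrableOn
          (Eventually.of_forall fun s => by positivity) hS.eventuallyLE
  rcases le_total 0 t with ht | ht
  · have h1 := integral_Ioi_of_hasDerivAt_of_tendsto' (a := t)
      (fun s _ => h.hasDerivAt_wronskian s) hi.integrableOn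
      (by simpa using h.gp_top.sub h.pg_top)
    have h2 := key (Set.Ioi t) (fun s hs => by
      rw [abs_of_nonneg ht] at hm
      exact (hm.trans (le_of_lt hs)).trans (le_abs_self s))
    rwa [h1, zero_sub, abs_neg] at h2
  · have h1 := integral_Iic_of_hasDerivAt_of_tendsto' (a := t)
      (fun s _ => h.hasDerivAt_wronskian s) hi.integrableOn
      (by simpa using h.gp_bot.sub h.pg_bot)
    have h2 := key (Set.Iic t) (fun s hs => by
      rw [abs_of_nonpos ht] at hm
      have : s ≤ t := hs
      exact (hm.trans (neg_le_neg this)).trans (neg_le_abs s))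
    rwa [h1, sub_zero] at h2

lemma abs_wronskian_le' (h : LineData p p₁ p₂ g g₁ g₂) (t : ℝ) :
    |g t * p₁ t - p t * g₁ t| ≤ ∫ s, (|g s * p₂ s| + |p s * g₂ s|) := by
  simpa using h.abs_wronskian_le (abs_nonneg t)

/-- If `a ≤ b` on `[x, y]` and `0 ≤ a`, then `a · f'` drops by at most `∫ |b f''|`
between `x` and `y`. -/
lemma drop_le {b f₁ f₂ : ℝ → ℝ} {a x y ε : ℝ} (ha : 0 ≤ a) (hxy : x ≤ y)
    (hab : ∀ s ∈ Set.Icc x y, a ≤ b s) (d : ∀ t, HasDerivAt f₁ (f₂ t) t) (c : Continuous f₂)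
    (hb : Integrable fun s => b s * f₂ s) (hε : ∫ s, |b s * f₂ s| ≤ ε) :
    a * f₁ x - ε ≤ a * f₁ y := by
  have h1 : ∫ s in x..y, a * f₂ s = a * f₁ y - a * f₁ x :=
    intervalIntegral.integral_eq_sub_of_hasDerivAt (fun s _ => (d s).const_mul a)
      ((continuous_const.mul c).intervalIntegrable _ _)
  have h2 : |∫ s in x..y, a * f₂ s| ≤ ∫ s in x..y, |b s * f₂ s| := by
    refine (intervalIntegral.abs_integral_le_integral_abs hxy).trans ?_
    refine intervalIntegral.integral_mono_on hxy
      ((continuous_const.mul c).abs.intervalIntegrable _ _) hb.abs.intervalIntegrable ?_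
    intro s hs
    rw [abs_mul, abs_mul, abs_of_nonneg ha]
    exact mul_le_mul_of_nonneg_right ((hab s hs).trans (le_abs_self _)) (abs_nonneg _)
  have h3 : ∫ s in x..y, |b s * f₂ s| ≤ ∫ s, |b s * f₂ s| := by
    rw [intervalIntegral.integral_of_le hxy]
    exact setIntegral_le_integral hb.abs (Eventually.of_forall fun s => abs_nonneg _)
  have := neg_abs_le (∫ s in x..y, a * f₂ s)
  linarith

/-- The one-sided form of the line bound. If `p g'` exceeded `2ε` at a point where `g ≥ 0`, then
`g p'` would exceed `ε` there as well, both `p` and `g` would increase from that point on with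
slopes that the integrals `∫ |g p''|`, `∫ |p g''|` are too small to bring to zero, and `p g'` would
stay away from `0` at `+∞`. -/
lemma mul_deriv_le (h : LineData p p₁ p₂ g g₁ g₂) {x : ℝ} (hg : 0 ≤ g x) :
    p x * g₁ x ≤ 2 * ∫ s, (|g s * p₂ s| + |p s * g₂ s|) := by
  set A := ∫ s, |g s * p₂ s| with hA
  set B := ∫ s, |p s * g₂ s| with hB
  have hA0 : 0 ≤ A := integral_nonneg fun s => abs_nonneg _
  have hB0 : 0 ≤ B := integral_nonneg fun s => abs_nonneg _
  have hAB : ∫ s, (|g s * p₂ s| + |p s * g₂ s|) = A + B :=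
    integral_add h.int_gp.abs h.int_pg.abs
  have hW := h.abs_wronskian_le' x
  rw [hAB] at hW ⊢
  by_contra! hM
  have hW1 := (abs_le.1 hW).1
  have hG1 : A < g x * p₁ x := by linarith
  have hP1 : B < p x * g₁ x := by linarith
  have hcp : Continuous p := continuous_iff_continuousAt.2 fun t => (h.dp t).continuousAt
  have hcg : Continuous g := continuous_iff_continuousAt.2 fun t => (h.dg t).continuousAt
  have hcp₁ : Continuous p₁ := continuous_iff_continuousAt.2 fun t => (h.dp₁ t).continuousAt
  have hcg₁ : Continuous g₁ := continuous_iff_continuousAt.2 fun t => (h.dg₁ t).continuousAt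
  -- As long as both slopes are positive on `[x, y)`, the lower bounds persist at `y`.
  have step : ∀ y, x ≤ y → (∀ s ∈ Set.Ico x y, 0 < p₁ s ∧ 0 < g₁ s) →
      p x ≤ p y ∧ g x * p₁ x - A ≤ g x * p₁ y ∧ p x * g₁ x - B ≤ p x * g₁ y := by
    intro y hxy hs
    have mp : MonotoneOn p (Set.Icc x y) := by
      refine monotoneOn_of_deriv_nonneg (convex_Icc x y) hcp.continuousOn
        (fun t _ => (h.dp t).differentiableAt.differentiableWithinAt) ?_
      intro t ht
      rw [interior_Icc] at ht
      rw [(h.dp t).deriv]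
      exact (hs t ⟨ht.1.le, ht.2⟩).1.le
    have mg : MonotoneOn g (Set.Icc x y) := by
      refine monotoneOn_of_deriv_nonneg (convex_Icc x y) hcg.continuousOn
        (fun t _ => (h.dg t).differentiableAt.differentiableWithinAt) ?_
      intro t ht
      rw [interior_Icc] at ht
      rw [(h.dg t).deriv]
      exact (hs t ⟨ht.1.le, ht.2⟩).2.le
    have hx : x ∈ Set.Icc x y := ⟨le_rfl, hxy⟩
    exact ⟨mp hx ⟨hxy, le_rfl⟩ hxy,
      drop_le hg hxy (fun s hs => mg hx hs hs.1) h.dp₁ h.cp₂ h.int_gp le_rfl,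
      drop_le (h.pos x).le hxy (fun s hs => mp hx hs hs.1) h.dg₁ h.cg₂ h.int_pg le_rfl⟩
  have posi : ∀ y, g x * p₁ x - A ≤ g x * p₁ y → p x * g₁ x - B ≤ p x * g₁ y →
      0 < p₁ y ∧ 0 < g₁ y := fun y h1 h2 =>
    ⟨pos_of_mul_pos_right (by linarith : 0 < g x * p₁ y) hg,
      pos_of_mul_pos_right (by linarith : 0 < p x * g₁ y) (h.pos x).le⟩
  have all : ∀ y, x ≤ y → 0 < p₁ y ∧ 0 < g₁ y := by
    by_contra! hcon
    set Z : Set ℝ := {y | x ≤ y ∧ (p₁ y ≤ 0 ∨ g₁ y ≤ 0)} with hZ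
    have hne : Z.Nonempty := by
      obtain ⟨y, hy, hy'⟩ := hcon
      refine ⟨y, hy, ?_⟩
      by_cases h0 : 0 < p₁ y
      · exact Or.inr (hy' h0)
      · exact Or.inl (not_lt.1 h0)
    have hcl : IsClosed Z := (isClosed_le continuous_const continuous_id).inter
      ((isClosed_le hcp₁ continuous_const).union (isClosed_le hcg₁ continuous_const))
    have hbd : BddBelow Z := ⟨x, fun y hy => hy.1⟩
    have hmem := hcl.csInf_mem hne hbd
    have hlt : ∀ s ∈ Set.Ico x (sInf Z), 0 < p₁ s ∧ 0 < g₁ s := by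
      intro s hs
      have hn := notMem_of_lt_csInf hs.2 hbd
      by_contra hc
      refine hn ⟨hs.1, ?_⟩
      by_cases h0 : 0 < p₁ s
      · exact Or.inr (not_lt.1 fun h1 => hc ⟨h0, h1⟩)
      · exact Or.inl (not_lt.1 h0)
    obtain ⟨_, h1, h2⟩ := step _ hmem.1 hlt
    obtain ⟨h3, h4⟩ := posi _ h1 h2
    rcases hmem.2 with h5 | h5 <;> linarith
  have low : ∀ y, x ≤ y → p x * g₁ x - B ≤ p y * g₁ y := by
    intro y hy
    obtain ⟨h1, h2, h3⟩ := step y hy (fun s hs => all s hs.1)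
    exact h3.trans (mul_le_mul_of_nonneg_right h1 (all y hy).2.le)
  have := ge_of_tendsto h.pg_top (eventually_atTop.2 ⟨x, low⟩)
  linarith

lemma abs_pg_le (h : LineData p p₁ p₂ g g₁ g₂) (x : ℝ) :
    |p x * g₁ x| ≤ 2 * ∫ s, (|g s * p₂ s| + |p s * g₂ s|) := by
  have hr : ∫ s, (|g (-s) * p₂ (-s)| + |p (-s) * g₂ (-s)|) =
      ∫ s, (|g s * p₂ s| + |p s * g₂ s|) :=
    integral_neg_eq_self (fun s => |g s * p₂ s| + |p s * g₂ s|) volume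
  rcases le_total 0 (g x) with hg | hg
  · have h1 := h.mul_deriv_le hg
    have h2 := h.reflect.mul_deriv_le (x := -x) (by simpa using hg)
    simp only [neg_neg, hr] at h2
    exact abs_le.2 ⟨by linarith, h1⟩
  · have h1 := h.neg.mul_deriv_le (x := x) (by simpa using hg)
    have h2 := h.neg.reflect.mul_deriv_le (x := -x) (by simpa using hg)
    simp only [neg_neg, neg_mul, mul_neg, abs_neg, hr] at h1 h2
    exact abs_le.2 ⟨by linarith, by linarith⟩

lemma abs_gp_le (h : LineData p p₁ p₂ g g₁ g₂) (x : ℝ) :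
    |g x * p₁ x| ≤ 3 * ∫ s, (|g s * p₂ s| + |p s * g₂ s|) := by
  have h1 := abs_le.1 (h.abs_pg_le x)
  have h2 := abs_le.1 (h.abs_wronskian_le' x)
  exact abs_le.2 ⟨by linarith, by linarith⟩

end LineData

/-! ### Partial derivatives, Fubini and cutoffs -/

/-- The partial derivative `∂_i f`. -/
noncomputable def pd {d : ℕ} (i : Fin d) (f : (Fin d → ℝ) → ℝ) (x : Fin d → ℝ) : ℝ :=
  fderiv ℝ f x (Pi.single i 1)

section Calculus

variable {d : ℕ}

lemma hess_eq (f : (Fin d → ℝ) → ℝ) (x : Fin d → ℝ) (j k : Fin d) :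
    hess f x j k = pd j (pd k f) x := rfl

lemma contDiff_pd {f : (Fin d → ℝ) → ℝ} {n : ℕ} (hf : ContDiff ℝ (n + 1 : ℕ) f) (i : Fin d) :
    ContDiff ℝ n (pd i f) :=
  (hf.fderiv_right (m := n) (by norm_cast)).clm_apply contDiff_const

lemma hasDerivAt_line {f : (Fin d → ℝ) → ℝ} (hf : Differentiable ℝ f) (x : Fin d → ℝ)
    (j : Fin d) (t : ℝ) :
    HasDerivAt (fun t => f (Function.update x j t)) (pd j f (Function.update x j t)) t :=
  (hf _).hasFDerivAt.comp_hasDerivAt t (hasDerivAt_update x j t)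

lemma continuous_line {f : (Fin d → ℝ) → ℝ} (hf : Continuous f) (x : Fin d → ℝ) (j : Fin d) :
    Continuous fun t => f (Function.update x j t) :=
  hf.comp (continuous_const.update j continuous_id)

lemma pd_mul {u v : (Fin d → ℝ) → ℝ} (hu : Differentiable ℝ u) (hv : Differentiable ℝ v)
    (i : Fin d) (x : Fin d → ℝ) :
    pd i (fun y => u y * v y) x = u x * pd i v x + pd i u x * v x := by
  unfold pd
  rw [fderiv_fun_mul (hu x) (hv x)]
  simp [mul_comm]

lemma pd_comm {f : (Fin d → ℝ) → ℝ} (hf : ContDiff ℝ 2 f) (j k : Fin d) (x : Fin d → ℝ) :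
    pd j (pd k f) x = pd k (pd j f) x := by
  have hd : DifferentiableAt ℝ (fderiv ℝ f) x :=
    ((hf.fderiv_right (m := 1) (by norm_num)).differentiable (by norm_num)) x
  have key : ∀ a b : Fin d, pd a (pd b f) x =
      fderiv ℝ (fderiv ℝ f) x (Pi.single a 1) (Pi.single b 1) := by
    intro a b
    change fderiv ℝ (fun y => fderiv ℝ f y (Pi.single b 1)) x (Pi.single a 1) = _
    rw [fderiv_clm_apply hd (differentiableAt_const _)]
    simp
  rw [key, key]
  exact (hf.contDiffAt.isSymmSndFDerivAt (by simp)) _ _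

end Calculus

/-- Fubini in coordinate `j`: the function `x ↦ ∫ F (x with x_j replaced by t) dt` does not depend
on `x_j`, so integrating it against a weight `ψ(x_j)` factors. -/
lemma lintegral_weight_mul_line {d : ℕ} (j : Fin d) (ψ : ℝ → ℝ≥0∞) (hψ : Measurable ψ)
    (F : (Fin d → ℝ) → ℝ≥0∞) (hF : Measurable F) :
    ∫⁻ x, ψ (x j) * ∫⁻ t, F (Function.update x j t) = (∫⁻ t, ψ t) * ∫⁻ x, F x := by
  let μ : Fin d → Measure ℝ := fun _ => volume
  let N : (Fin d → ℝ) → ℝ≥0∞ := fun x => ∫⁻ t, F (Function.update x j t)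
  have hN : Measurable N := by
    have := hF.lmarginal μ (s := {j})
    rwa [lmarginal_singleton] at this
  have hψj : Measurable fun x : Fin d → ℝ => ψ (x j) := hψ.comp (measurable_pi_apply j)
  have e1 : ∀ H : (Fin d → ℝ) → ℝ≥0∞, Measurable H → ∫⁻ x, H x =
      (∫⋯∫⁻_(Finset.univ.erase j), (fun x => ∫⁻ t, H (Function.update x j t)) ∂μ) 0 := by
    intro H hH
    rw [volume_pi, lintegral_eq_lmarginal_univ (μ := μ) 0,
      lmarginal_erase' (μ := μ) H hH (Finset.mem_univ j)]
  have e2 : (fun x => ∫⁻ t, ψ (Function.update x j t j) * N (Function.update x j t)) =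
      fun x => (∫⁻ t, ψ t) * N x := by
    ext x
    simp only [N, Function.update_self, Function.update_idem]
    rw [lintegral_mul_const _ hψ]
  rw [e1 F hF, e1 (fun x => ψ (x j) * N x) (hψj.mul hN), e2]
  simp only [lmarginal]
  rw [lintegral_const_mul]
  exact hN.comp measurable_updateFinset

/-- Smooth cutoffs at scale `m`, equal to `1` on the cube of half-side `m` and supported in the cube
of half-side `2m`. They are products of one-variable cutoffs, so that `∂_j φ` is supported where
`|x_j| ≥ m`. -/
lemma exists_cutoff (d : ℕ) : ∃ C : ℝ, 0 ≤ C ∧ ∀ m : ℝ, 0 < m → ∃ φ : (Fin d → ℝ) → ℝ,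
    ContDiff ℝ 1 φ ∧ HasCompactSupport φ ∧ (∀ x, |φ x| ≤ 1) ∧
    (∀ x, (∀ i, |x i| ≤ m) → φ x = 1) ∧
    ∀ j x, |pd j φ x| ≤ C / m ∧ (pd j φ x ≠ 0 → m ≤ |x j| ∧ ∀ i, |x i| ≤ 2 * m) := by
  let χ : ContDiffBump (0 : ℝ) := ⟨1, 2, one_pos, one_lt_two⟩
  have hχ : ContDiff ℝ 1 χ := χ.contDiff
  have hχd : Differentiable ℝ χ := hχ.differentiable (by norm_num)
  obtain ⟨C, hC⟩ := χ.hasCompactSupport.deriv.exists_bound_of_continuous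
    (hχ.continuous_deriv (by norm_num))
  have hC0 : 0 ≤ C := (norm_nonneg _).trans (hC 0)
  refine ⟨C, hC0, fun m hm => ?_⟩
  let φ : (Fin d → ℝ) → ℝ := fun x => ∏ i, χ (x i / m)
  have hφ : ContDiff ℝ 1 φ :=
    contDiff_prod fun i _ => hχ.comp ((contDiff_apply ℝ ℝ i).div_const m)
  have hz : ∀ x, φ x ≠ 0 → x ∈ Set.Icc (fun _ : Fin d => -(2 * m)) (fun _ => 2 * m) := by
    intro x hx
    have h1 : ∀ i, |x i| ≤ 2 * m := by
      intro i
      have h2 : χ (x i / m) ≠ 0 := fun h0 => hx (Finset.prod_eq_zero (Finset.mem_univ i) h0)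
      have h3 : x i / m ∈ Function.support χ := h2
      rw [χ.support_eq, Metric.mem_ball, dist_zero_right, Real.norm_eq_abs, abs_div,
        abs_of_pos hm, div_lt_iff₀ hm] at h3
      exact h3.le
    exact ⟨fun i => (abs_le.1 (h1 i)).1, fun i => (abs_le.1 (h1 i)).2⟩
  have hts : tsupport φ ⊆ Set.Icc (fun _ : Fin d => -(2 * m)) (fun _ => 2 * m) :=
    closure_minimal hz isClosed_Icc
  refine ⟨φ, hφ, HasCompactSupport.of_support_subset_isCompact isCompact_Icc hz, ?_, ?_, ?_⟩
  · intro x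
    rw [abs_of_nonneg (Finset.prod_nonneg fun i _ => χ.nonneg)]
    exact Finset.prod_le_one (fun i _ => χ.nonneg) fun i _ => χ.le_one
  · intro x hx
    refine Finset.prod_eq_one fun i _ => χ.one_of_mem_closedBall ?_
    rw [Metric.mem_closedBall, dist_zero_right, Real.norm_eq_abs, abs_div, abs_of_pos hm]
    exact (div_le_one hm).2 (hx i)
  · intro j x
    set c : ℝ := ∏ i ∈ Finset.univ.erase j, χ (x i / m) with hc
    have hc1 : |c| ≤ 1 := by
      rw [abs_of_nonneg (Finset.prod_nonneg fun i _ => χ.nonneg)]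
      exact Finset.prod_le_one (fun i _ => χ.nonneg) fun i _ => χ.le_one
    have hline : (fun t => φ (Function.update x j t)) = fun t => χ (t / m) * c := by
      ext t
      simp only [φ, hc]
      rw [← Finset.mul_prod_erase _ _ (Finset.mem_univ j), Function.update_self]
      congr 1
      refine Finset.prod_congr rfl fun i hi => ?_
      rw [Function.update_of_ne (Finset.ne_of_mem_erase hi)]
    have h1 := hasDerivAt_line (hφ.differentiable (by norm_num)) x j (x j)
    rw [hline, Function.update_eq_self] at h1
    have h2 : HasDerivAt (fun t => χ (t / m) * c) (deriv χ (x j / m) * (1 / m) * c) (x j) :=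
      (((hχd _).hasDerivAt).comp (x j) ((hasDerivAt_id (x j)).div_const m)).mul_const c
    have h3 := h1.unique h2
    refine ⟨?_, fun hne => ⟨?_, ?_⟩⟩
    · rw [h3, abs_mul, abs_mul, abs_of_pos (one_div_pos.2 hm)]
      have h4 : |deriv χ (x j / m)| ≤ C := hC _
      calc |deriv χ (x j / m)| * (1 / m) * |c| ≤ C * (1 / m) * 1 := by gcongr
        _ = C / m := by ring
    · by_contra! hlt
      apply hne
      have hev : (χ : ℝ → ℝ) =ᶠ[nhds (x j / m)] 1 := by
        refine χ.eventuallyEq_one_of_mem_ball ?_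
        rw [Metric.mem_ball, dist_zero_right, Real.norm_eq_abs, abs_div, abs_of_pos hm]
        exact (div_lt_one hm).2 hlt
      have h5 : deriv χ (x j / m) = 0 := by
        rw [hev.deriv_eq]
        exact deriv_const _ _
      rw [h3, h5]
      simp
    · have hx : x ∈ tsupport φ := by
        refine support_fderiv_subset ℝ ?_
        intro h0
        exact hne (by simp [pd, h0])
      intro i
      exact abs_le.2 ⟨(hts hx).1 i, (hts hx).2 i⟩

/-! ### Vanishing of the flux -/

section Flux

variable {d : ℕ} {p g : (Fin d → ℝ) → ℝ}

/-- The density `|g ∂_j² p| + |p ∂_j² g|`, which controls first-order terms along lines in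
direction `j`. -/
noncomputable def lineMass (j : Fin d) (p g : (Fin d → ℝ) → ℝ) (x : Fin d → ℝ) : ℝ :=
  |g x * pd j (pd j p) x| + |p x * pd j (pd j g) x|

/-- `lineMass j` restricted to the region `|x_k| ≥ m`. -/
noncomputable def tailMass (m : ℝ) (j k : Fin d) (p g : (Fin d → ℝ) → ℝ) :
    (Fin d → ℝ) → ℝ≥0∞ :=
  {x : Fin d → ℝ | m ≤ |x k|}.indicator fun x => ENNReal.ofReal (lineMass j p g x)

/-- The functions `g ∂_j p` and `p ∂_j g` vanish at both ends of the line through `x` in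
direction `j`. -/
def VanishOnLine (j : Fin d) (p g : (Fin d → ℝ) → ℝ) (x : Fin d → ℝ) : Prop :=
  (Tendsto (fun t => g (Function.update x j t) * pd j p (Function.update x j t)) atTop (nhds 0) ∧
    Tendsto (fun t => g (Function.update x j t) * pd j p (Function.update x j t)) atBot (nhds 0)) ∧
  (Tendsto (fun t => pd j g (Function.update x j t) * p (Function.update x j t)) atTop (nhds 0) ∧
    Tendsto (fun t => pd j g (Function.update x j t) * p (Function.update x j t)) atBot (nhds 0))

lemma continuous_lineMass (hp : ContDiff ℝ 2 p) (hg : ContDiff ℝ 2 g) (j : Fin d) :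
    Continuous (lineMass j p g) := by
  have h1 := (contDiff_pd (n := 0) (contDiff_pd (n := 1) hp j) j).continuous
  have h2 := (contDiff_pd (n := 0) (contDiff_pd (n := 1) hg j) j).continuous
  exact (hg.continuous.mul h1).abs.add (hp.continuous.mul h2).abs

lemma measurable_tailMass (hp : ContDiff ℝ 2 p) (hg : ContDiff ℝ 2 g) (m : ℝ) (j k : Fin d) :
    Measurable (tailMass m j k p g) :=
  (continuous_lineMass hp hg j).measurable.ennreal_ofReal.indicator
    (measurableSet_le measurable_const (measurable_pi_apply k).abs)

lemma lineData_of (hpos : ∀ x, 0 < p x) (hp : ContDiff ℝ 2 p) (hg : ContDiff ℝ 2 g)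
    {j : Fin d} {x : Fin d → ℝ} (hv : VanishOnLine j p g x)
    (hi : Integrable fun t => lineMass j p g (Function.update x j t)) :
    LineData (fun t => p (Function.update x j t)) (fun t => pd j p (Function.update x j t))
      (fun t => pd j (pd j p) (Function.update x j t)) (fun t => g (Function.update x j t))
      (fun t => pd j g (Function.update x j t))
      (fun t => pd j (pd j g) (Function.update x j t)) := by
  have hp1 := contDiff_pd (n := 1) hp j
  have hg1 := contDiff_pd (n := 1) hg j
  have hp2 := (contDiff_pd (n := 0) hp1 j).continuous
  have hg2 := (contDiff_pd (n := 0) hg1 j).continuous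
  refine ⟨fun t => hpos _, hasDerivAt_line (hp.differentiable (by norm_num)) x j,
    hasDerivAt_line (hp1.differentiable (by norm_num)) x j, continuous_line hp2 x j,
    hasDerivAt_line (hg.differentiable (by norm_num)) x j,
    hasDerivAt_line (hg1.differentiable (by norm_num)) x j, continuous_line hg2 x j,
    ?_, ?_, hv.1.1, hv.1.2, ?_, ?_⟩
  · refine hi.mono' (continuous_line (hg.continuous.mul hp2) x j).aestronglyMeasurable
      (Eventually.of_forall fun t => ?_)
    exact le_add_of_nonneg_right (abs_nonneg _)
  · refine hi.mono' (continuous_line (hp.continuous.mul hg2) x j).aestronglyMeasurable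
      (Eventually.of_forall fun t => ?_)
    exact le_add_of_nonneg_left (abs_nonneg _)
  · simpa only [mul_comm] using hv.2.1
  · simpa only [mul_comm] using hv.2.2

lemma lineMass_nonneg (j : Fin d) (x : Fin d → ℝ) : 0 ≤ lineMass j p g x :=
  add_nonneg (abs_nonneg _) (abs_nonneg _)

/-- First-order terms in direction `j`, bounded by the mass of their line, at points where
`|x_k| ≥ m` for another coordinate `k`; the whole line then lies in that region. -/
lemma ofReal_first_order_le (hpos : ∀ x, 0 < p x) (hp : ContDiff ℝ 2 p) (hg : ContDiff ℝ 2 g)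
    {j k : Fin d} (hjk : k ≠ j) {x : Fin d → ℝ} (hv : VanishOnLine j p g x) {m : ℝ}
    (hm : m ≤ |x k|) :
    ENNReal.ofReal |p x * pd j g x| ≤ 3 * ∫⁻ t, tailMass m j k p g (Function.update x j t) ∧
    ENNReal.ofReal |g x * pd j p x| ≤ 3 * ∫⁻ t, tailMass m j k p g (Function.update x j t) := by
  have e : ∀ t, tailMass m j k p g (Function.update x j t) =
      ENNReal.ofReal (lineMass j p g (Function.update x j t)) := by
    intro t
    refine Set.indicator_of_mem ?_ _
    simpa [Function.update_of_ne hjk] using hm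
  simp only [e]
  by_cases hfin : ∫⁻ t, ENNReal.ofReal (lineMass j p g (Function.update x j t)) = ∞
  · simp [hfin]
  have hi : Integrable fun t => lineMass j p g (Function.update x j t) := by
    refine (lintegral_ofReal_ne_top_iff_integrable
      (continuous_line (continuous_lineMass hp hg j) x j).aestronglyMeasurable
      (Eventually.of_forall fun t => lineMass_nonneg _ _)).1 hfin
  have L := lineData_of hpos hp hg hv hi
  have hI : 0 ≤ ∫ t, lineMass j p g (Function.update x j t) :=
    integral_nonneg fun t => lineMass_nonneg _ _
  rw [← ofReal_integral_eq_lintegral_ofReal hi (Eventually.of_forall fun t => lineMass_nonneg _ _),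
    show (3 : ℝ≥0∞) = ENNReal.ofReal 3 by simp, ← ENNReal.ofReal_mul (by norm_num)]
  have h1 := L.abs_pg_le (x j)
  have h2 := L.abs_gp_le (x j)
  simp only [Function.update_eq_self] at h1 h2
  refine ⟨ENNReal.ofReal_le_ofReal (h1.trans ?_), ENNReal.ofReal_le_ofReal h2⟩
  exact mul_le_mul_of_nonneg_right (by norm_num) hI

/-- The Wronskian in direction `j` at a point with `|x_j| ≥ m`, bounded by the mass of the part of
its line in that region. -/
lemma ofReal_wronskian_le (hpos : ∀ x, 0 < p x) (hp : ContDiff ℝ 2 p) (hg : ContDiff ℝ 2 g)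
    {j : Fin d} {x : Fin d → ℝ} (hv : VanishOnLine j p g x) {m : ℝ} (hm : m ≤ |x j|) :
    ENNReal.ofReal |g x * pd j p x - p x * pd j g x| ≤
      3 * ∫⁻ t, tailMass m j j p g (Function.update x j t) := by
  have hS : MeasurableSet {t : ℝ | m ≤ |t|} := measurableSet_le measurable_const measurable_abs
  have e : ∫⁻ t, tailMass m j j p g (Function.update x j t) =
      ∫⁻ t in {t : ℝ | m ≤ |t|}, ENNReal.ofReal (lineMass j p g (Function.update x j t)) := by
    rw [← lintegral_indicator hS]
    congr 1 with t
    simp [tailMass, Set.indicator]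
  rw [e]
  have hc := continuous_line (continuous_lineMass hp hg j) x j
  by_cases hfin : ∫⁻ t in {t : ℝ | m ≤ |t|},
      ENNReal.ofReal (lineMass j p g (Function.update x j t)) = ∞
  · simp [hfin]
  have hi1 : IntegrableOn (fun t => lineMass j p g (Function.update x j t)) {t : ℝ | m ≤ |t|} :=
    (lintegral_ofReal_ne_top_iff_integrable hc.aestronglyMeasurable
      (Eventually.of_forall fun t => lineMass_nonneg _ _)).1 hfin
  have hi : Integrable fun t => lineMass j p g (Function.update x j t) := by
    have h2 : IntegrableOn (fun t => lineMass j p g (Function.update x j t)) (Set.Icc (-m) m) :=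
      hc.integrableOn_Icc
    rw [← integrableOn_univ]
    refine (hi1.union h2).mono_set fun t _ => ?_
    rcases le_total m |t| with h | h
    · exact Or.inl h
    · exact Or.inr (abs_le.1 h)
  have L := lineData_of hpos hp hg hv hi
  have h1 := L.abs_wronskian_le hm
  simp only [Function.update_eq_self] at h1
  rw [← ofReal_integral_eq_lintegral_ofReal hi1
    (Eventually.of_forall fun t => lineMass_nonneg _ _)]
  refine (ENNReal.ofReal_le_ofReal h1).trans ?_
  exact le_mul_of_one_le_left zero_le (by norm_num)

/-- Averaging a line mass over `|x_j| ≤ 2m` with weight of order `1/m` gives a bound independent of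
`m`, up to the factor `∫ tailMass`. -/
lemma lintegral_flux (hp : ContDiff ℝ 2 p) (hg : ContDiff ℝ 2 g) {C m : ℝ} (hC : 0 ≤ C)
    (hm : 0 < m) (j k : Fin d) :
    ∫⁻ x, (Set.Icc (-(2 * m)) (2 * m)).indicator (fun _ => ENNReal.ofReal (C / m)) (x j) *
      (3 * ∫⁻ t, tailMass m j k p g (Function.update x j t)) =
    ENNReal.ofReal (12 * C) * ∫⁻ x, tailMass m j k p g x := by
  have hT := measurable_tailMass hp hg m j k
  have e : ∀ x : Fin d → ℝ, 3 * ∫⁻ t, tailMass m j k p g (Function.update x j t) =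
      ∫⁻ t, 3 * tailMass m j k p g (Function.update x j t) := by
    intro x
    rw [lintegral_const_mul]
    exact hT.comp (measurable_update x)
  simp only [e]
  rw [lintegral_weight_mul_line j _ (measurable_const.indicator measurableSet_Icc)
    (fun x => 3 * tailMass m j k p g x) (hT.const_mul 3), lintegral_const_mul 3 hT,
    lintegral_indicator_const measurableSet_Icc, Real.volume_Icc,
    ← ENNReal.ofReal_mul (by positivity), ← mul_assoc]
  congr 1
  rw [show (3 : ℝ≥0∞) = ENNReal.ofReal 3 by simp, ← ENNReal.ofReal_mul
    (mul_nonneg (by positivity) (by linarith))]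
  congr 1
  field_simp
  ring

lemma tendsto_tailMass (hp : ContDiff ℝ 2 p) (hg : ContDiff ℝ 2 g) (j k : Fin d)
    (hi : Integrable (lineMass j p g)) :
    Tendsto (fun n : ℕ => ∫⁻ x, tailMass (n + 1 : ℝ) j k p g x) atTop (nhds 0) := by
  have hfin : ∫⁻ x, ENNReal.ofReal (lineMass j p g x) ≠ ∞ :=
    (lintegral_ofReal_ne_top_iff_integrable hi.aestronglyMeasurable
      (Eventually.of_forall fun t => lineMass_nonneg _ _)).2 hi
  have := tendsto_lintegral_of_dominated_convergence
    (F := fun (n : ℕ) x => tailMass (n + 1 : ℝ) j k p g x) (f := fun _ => 0) (μ := volume)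
    (fun x => ENNReal.ofReal (lineMass j p g x))
    (fun n => measurable_tailMass hp hg _ j k)
    (fun n => Eventually.of_forall fun x => Set.indicator_le_self _ _ x) hfin
    (Eventually.of_forall fun x => ?_)
  · simpa using this
  · obtain ⟨N, hN⟩ := exists_nat_gt |x k|
    refine tendsto_const_nhds.congr' ?_
    filter_upwards [eventually_ge_atTop N] with n hn
    refine (Set.indicator_of_notMem ?_ _).symm
    have : (N : ℝ) ≤ n := by exact_mod_cast hn
    simp only [Set.mem_ofPred_eq, not_le]
    linarith

/-- Integration by parts against a compactly supported cutoff: the terms containing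
`∂_j g · ∂_k p` cancel, and only derivatives of the cutoff remain. -/
lemma integral_cutoff_eq {φ : (Fin d → ℝ) → ℝ} (hφ : ContDiff ℝ 1 φ) (hcs : HasCompactSupport φ)
    (hp : ContDiff ℝ 2 p) (hg : ContDiff ℝ 2 g) (j k : Fin d) :
    ∫ x, φ x * (g x * pd j (pd k p) x - p x * pd j (pd k g) x) =
      ∫ x, (pd k φ x * (p x * pd j g x) - pd j φ x * (g x * pd k p x)) := by
  have hpk := contDiff_pd (n := 1) hp k
  have hgj := contDiff_pd (n := 1) hg j
  have hp1 : ContDiff ℝ 1 p := hp.of_le (by norm_num)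
  have hg1 : ContDiff ℝ 1 g := hg.of_le (by norm_num)
  have hcφ : ∀ i, HasCompactSupport (pd i φ) := fun i => hcs.fderiv_apply ℝ _
  have hφc : ∀ i, Continuous (pd i φ) := fun i => (contDiff_pd (n := 0) hφ i).continuous
  have parts : ∀ (i : Fin d) (v : (Fin d → ℝ) → ℝ), ContDiff ℝ 1 v →
      Integrable (fun x => φ x * pd i v x) ∧ Integrable (fun x => pd i φ x * v x) ∧
      ∫ x, φ x * pd i v x = - ∫ x, pd i φ x * v x := by
    intro i v hv
    have i1 : Integrable (fun x => φ x * pd i v x) :=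
      (hφ.continuous.mul (contDiff_pd (n := 0) hv i).continuous).integrable_of_hasCompactSupport
        hcs.mul_right
    have i2 : Integrable (fun x => pd i φ x * v x) :=
      ((hφc i).mul hv.continuous).integrable_of_hasCompactSupport (hcφ i).mul_right
    have i3 : Integrable (fun x => φ x * v x) :=
      (hφ.continuous.mul hv.continuous).integrable_of_hasCompactSupport hcs.mul_right
    exact ⟨i1, i2, integral_mul_fderiv_eq_neg_fderiv_mul_of_integrable i2 i1 i3
      (fun x _ => hφ.differentiable (by norm_num) x)
      (fun x _ => hv.differentiable (by norm_num) x)⟩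
  obtain ⟨a1, a2, a3⟩ := parts j (fun x => g x * pd k p x) (hg1.mul hpk)
  obtain ⟨b1, b2, b3⟩ := parts k (fun x => p x * pd j g x) (hp1.mul hgj)
  have e : ∀ x, φ x * (g x * pd j (pd k p) x - p x * pd j (pd k g) x) =
      φ x * pd j (fun x => g x * pd k p x) x - φ x * pd k (fun x => p x * pd j g x) x := by
    intro x
    rw [pd_mul (hg1.differentiable (by norm_num)) (hpk.differentiable (by norm_num)),
      pd_mul (hp1.differentiable (by norm_num)) (hgj.differentiable (by norm_num)),
      pd_comm hg j k]
    ring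
  simp only [e]
  rw [integral_sub a1 b1, integral_sub b2 a2, a3, b3]
  ring

end Flux

/-- The identity with respect to Lebesgue measure. -/
lemma integral_sub_eq_zero {d : ℕ} {p g : (Fin d → ℝ) → ℝ} (hpos : ∀ x, 0 < p x)
    (hp : ContDiff ℝ 2 p) (hg : ContDiff ℝ 2 g)
    (hi1 : ∀ j k, Integrable fun x => g x * pd j (pd k p) x)
    (hi2 : ∀ j k, Integrable fun x => p x * pd j (pd k g) x)
    (hv : ∀ j, ∀ᵐ x, VanishOnLine j p g x) (j k : Fin d) :
    ∫ x, (g x * pd j (pd k p) x - p x * pd j (pd k g) x) = 0 := by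
  obtain ⟨C, hC, hcut⟩ := exists_cutoff d
  have hn : ∀ n : ℕ, (0 : ℝ) < n + 1 := fun n => by positivity
  choose φ hφ hcs hφ1 hφe hφd using fun n : ℕ => hcut (n + 1) (hn n)
  have hD := (hi1 j k).sub (hi2 j k)
  have hmass : ∀ i, Integrable (lineMass i p g) := fun i => (hi1 i i).abs.add (hi2 i i).abs
  have lim1 : Tendsto
      (fun n => ∫ x, φ n x * (g x * pd j (pd k p) x - p x * pd j (pd k g) x)) atTop
      (nhds (∫ x, (g x * pd j (pd k p) x - p x * pd j (pd k g) x))) := by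
    refine tendsto_integral_of_dominated_convergence
      (fun x => |g x * pd j (pd k p) x - p x * pd j (pd k g) x|)
      (fun n => (hφ n).continuous.aestronglyMeasurable.mul hD.aestronglyMeasurable) hD.abs
      (fun n => Eventually.of_forall fun x => ?_) (Eventually.of_forall fun x => ?_)
    · rw [Real.norm_eq_abs, abs_mul]
      exact mul_le_of_le_one_left (abs_nonneg _) (hφ1 n x)
    · obtain ⟨N, hN⟩ := exists_nat_gt ‖x‖
      refine tendsto_const_nhds.congr' ?_
      filter_upwards [eventually_ge_atTop N] with n hNn
      have h1 : (N : ℝ) ≤ n := by exact_mod_cast hNn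
      rw [hφe n x fun i => by
        have := norm_le_pi_norm x i
        rw [Real.norm_eq_abs] at this
        linarith, one_mul]
  -- The flux through the cutoff region is bounded by two tail masses.
  have bound : ∀ n : ℕ,
      ‖∫ x, φ n x * (g x * pd j (pd k p) x - p x * pd j (pd k g) x)‖ₑ ≤
        ENNReal.ofReal (12 * C) * (∫⁻ x, tailMass (n + 1 : ℝ) j k p g x) +
        ENNReal.ofReal (12 * C) * ∫⁻ x, tailMass (n + 1 : ℝ) k j p g x := by
    intro n
    rw [integral_cutoff_eq (hφ n) (hcs n) hp hg j k]
    refine (enorm_integral_le_lintegral_enorm _).trans ?_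
    rw [← lintegral_flux hp hg hC (hn n) j k, ← lintegral_flux hp hg hC (hn n) k j]
    rw [← lintegral_add_left]
    swap
    · have hT := (measurable_tailMass hp hg (n + 1 : ℝ) j k).lmarginal (fun _ => volume) (s := {j})
      rw [lmarginal_singleton] at hT
      exact ((measurable_const.indicator measurableSet_Icc).comp (measurable_pi_apply j)).mul
        (hT.const_mul 3)
    have cut : ∀ (a b : Fin d) (x : Fin d → ℝ), pd b (φ n) x ≠ 0 →
        ENNReal.ofReal |pd b (φ n) x| ≤ (Set.Icc (-(2 * (n + 1 : ℝ))) (2 * (n + 1))).indicator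
          (fun _ => ENNReal.ofReal (C / (n + 1))) (x a) := by
      intro a b x hx
      have hxa : x a ∈ Set.Icc (-(2 * (n + 1 : ℝ))) (2 * (n + 1)) :=
        abs_le.1 (((hφd n b x).2 hx).2 a)
      rw [Set.indicator_of_mem hxa]
      exact ENNReal.ofReal_le_ofReal (hφd n b x).1
    refine lintegral_mono_ae ?_
    filter_upwards [hv j, hv k] with x hj hk
    rw [Real.enorm_eq_ofReal_abs]
    by_cases hjk : j = k
    · -- On the diagonal the two terms combine into the Wronskian.
      subst hjk
      refine le_trans ?_ le_self_add
      by_cases h0 : pd j (φ n) x = 0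
      · simp [h0]
      rw [← mul_sub, abs_mul, ENNReal.ofReal_mul (abs_nonneg _), abs_sub_comm]
      exact mul_le_mul' (cut j j x h0) (ofReal_wronskian_le hpos hp hg hj ((hφd n j x).2 h0).1)
    · refine (ENNReal.ofReal_le_ofReal (abs_sub _ _)).trans ?_
      rw [ENNReal.ofReal_add (abs_nonneg _) (abs_nonneg _), abs_mul (pd k (φ n) x),
        abs_mul (pd j (φ n) x), ENNReal.ofReal_mul (abs_nonneg _),
        ENNReal.ofReal_mul (abs_nonneg _)]
      refine add_le_add ?_ ?_
      · by_cases h0 : pd k (φ n) x = 0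
        · simp [h0]
        exact mul_le_mul' (cut j k x h0)
          (ofReal_first_order_le hpos hp hg (Ne.symm hjk) hj ((hφd n k x).2 h0).1).1
      · by_cases h0 : pd j (φ n) x = 0
        · simp [h0]
        exact mul_le_mul' (cut k j x h0)
          (ofReal_first_order_le hpos hp hg hjk hk ((hφd n j x).2 h0).1).2
  have lim2 : Tendsto
      (fun n => ∫ x, φ n x * (g x * pd j (pd k p) x - p x * pd j (pd k g) x)) atTop
      (nhds 0) := by
    rw [tendsto_zero_iff_enorm_tendsto_zero]
    refine tendsto_of_tendsto_of_tendsto_of_le_of_le tendsto_const_nhds ?_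
      (fun n => zero_le) bound
    have t1 := ENNReal.Tendsto.const_mul (a := ENNReal.ofReal (12 * C))
      (tendsto_tailMass hp hg j k (hmass j)) (Or.inr ENNReal.ofReal_ne_top)
    have t2 := ENNReal.Tendsto.const_mul (a := ENNReal.ofReal (12 * C))
      (tendsto_tailMass hp hg k j (hmass k)) (Or.inr ENNReal.ofReal_ne_top)
    simpa using t1.add t2
  exact tendsto_nhds_unique lim1 lim2

/-- **Second-order Stein's identity.** If `X` has an everywhere positive `C²` density `p` on
`ℝ^d`, and `g : ℝ^d → ℝ` is `C²` with `g·T_p` and `∇²g` (entrywise) integrable w.r.t. the law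
of `X`, and the boundary terms in the double integration by parts vanish, then
`E[g(X)·T_p(X)] = E[∇²g(X)]`, an identity between `d × d` matrices (stated entrywise). -/
theorem stmt_2 {d : ℕ} (p : (Fin d → ℝ) → ℝ)
    (hp_pos : ∀ x, 0 < p x) (hp : ContDiff ℝ 2 p)
    (ν : Measure (Fin d → ℝ))
    (hν : ν = (volume : Measure (Fin d → ℝ)).withDensity fun x => ENNReal.ofReal (p x))
    (hprob : IsProbabilityMeasure ν)
    (g : (Fin d → ℝ) → ℝ) (hg : ContDiff ℝ 2 g)
    (hint1 : ∀ j k, Integrable (fun x => g x * score2 p x j k) ν)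
    (hint2 : ∀ j k, Integrable (fun x => hess g x j k) ν)
    -- vanishing of the boundary term `g · ∂_k p` as coordinate `j` tends to `±∞`
    (hbound1 : ∀ j k : Fin d, ∀ᵐ x ∂(volume : Measure (Fin d → ℝ)),
      Tendsto (fun t => g (Function.update x j t) *
        fderiv ℝ p (Function.update x j t) (Pi.single k 1)) atTop (nhds 0) ∧
      Tendsto (fun t => g (Function.update x j t) *
        fderiv ℝ p (Function.update x j t) (Pi.single k 1)) atBot (nhds 0))
    -- vanishing of the boundary term `∂_j g · p` as coordinate `k` tends to `±∞`
    (hbound2 : ∀ j k : Fin d, ∀ᵐ x ∂(volume : Measure (Fin d → ℝ)),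
      Tendsto (fun t => fderiv ℝ g (Function.update x k t) (Pi.single j 1) *
        p (Function.update x k t)) atTop (nhds 0) ∧
      Tendsto (fun t => fderiv ℝ g (Function.update x k t) (Pi.single j 1) *
        p (Function.update x k t)) atBot (nhds 0)) :
    ∀ j k, ∫ x, g x * score2 p x j k ∂ν = ∫ x, hess g x j k ∂ν := by
  have hm : Measurable fun x => ENNReal.ofReal (p x) := hp.continuous.measurable.ennreal_ofReal
  have hlt : ∀ᵐ x : Fin d → ℝ, ENNReal.ofReal (p x) < ∞ :=
    Eventually.of_forall fun x => ENNReal.ofReal_lt_top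
  have hr : ∀ x, (ENNReal.ofReal (p x)).toReal = p x := fun x =>
    ENNReal.toReal_ofReal (hp_pos x).le
  have e1 : ∀ j k x, p x * (g x * score2 p x j k) = g x * pd j (pd k p) x := by
    intro j k x
    have := (hp_pos x).ne'
    change p x * (g x * (pd j (pd k p) x / p x)) = _
    field_simp
  have hi1 : ∀ j k, Integrable fun x => g x * pd j (pd k p) x := by
    intro j k
    have := hint1 j k
    rw [hν, integrable_withDensity_iff_integrable_smul' hm hlt] at this
    simpa only [hr, smul_eq_mul, e1] using this
  have hi2 : ∀ j k, Integrable fun x => p x * pd j (pd k g) x := by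
    intro j k
    have := hint2 j k
    rw [hν, integrable_withDensity_iff_integrable_smul' hm hlt] at this
    simpa only [hr, smul_eq_mul, hess_eq] using this
  have hv : ∀ j, ∀ᵐ x, VanishOnLine j p g x := fun j => by
    filter_upwards [hbound1 j j, hbound2 j j] with x h1 h2
    exact ⟨h1, h2⟩
  intro j k
  have key := integral_sub_eq_zero hp_pos hp hg hi1 hi2 hv j k
  rw [integral_sub (hi1 j k) (hi2 j k), sub_eq_zero] at key
  rw [hν, integral_withDensity_eq_integral_toReal_smul hm hlt,
    integral_withDensity_eq_integral_toReal_smul hm hlt]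
  simpa only [hr, smul_eq_mul, e1, hess_eq] using key
end

section
/- Let Ω ∈ ℝ^{d×d} be a symmetric matrix with eigenvalues λ₁ ≥ λ₂ ≥ … ≥ λ_d, let ℓ ∈ {1,…,d−1} be such that λ_ℓ − λ_{ℓ+1} > 0, and let Π_ℓ ∈ ℝ^{d×d} be the orthogonal projection onto the subspace spanned by eigenvectors of Ω corresponding to λ₁,…,λ_ℓ. Then for every symmetric matrix Λ ∈ ℝ^{d×d} with 0 ⪯ Λ ⪯ I_d and trace(Λ) = ℓ, one has (λ_ℓ − λ_{ℓ+1})·‖Π_ℓ − Λ‖_F² ≤ 2⟨Ω, Π_ℓ − Λ⟩. -/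
/-!
Conjugating by `U` reduces everything to the eigenbasis: put `M = Uᵀ Λ U` and
`E = diag (1_{i < ℓ})`. Then `0 ⪯ M ⪯ 1` and `trace M = trace E = ℓ`. Since `trace M² ≤ trace M`
(`trace_sq_le_trace`), expanding the square gives
`‖E - M‖_F² ≤ 2 ∑_{i < ℓ} (1 - M i i)`.
On the other side `⟨diag γ, E - M⟩ = ∑ γ i (e i - M i i)`, where the terms with `i < ℓ` are
nonnegative multiples of `γ i ≥ γ_ℓ` and the other ones nonpositive multiples of
`γ i ≤ γ_{ℓ+1}`; as the total mass `∑ (e i - M i i)` vanishes, the sum is at least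
`(γ_ℓ - γ_{ℓ+1}) ∑_{i < ℓ} (1 - M i i)`. (Indices `i` start at `0`, so `γ_ℓ` is `γ` at `ℓ - 1`.)
-/

open Matrix Finset

/-- `M - M² = M (1 - M) M + (1 - M) M (1 - M)` is a sum of congruences of positive semidefinite
matrices. -/
lemma trace_sq_le_trace {n : Type*} [Fintype n] [DecidableEq n] {M : Matrix n n ℝ}
    (h0 : M.PosSemidef) (h1 : (1 - M).PosSemidef) : (M * M).trace ≤ M.trace := by
  have hA := (h1.mul_mul_conjTranspose_same M).trace_nonneg
  have hB := (h0.mul_mul_conjTranspose_same (1 - M)).trace_nonneg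
  rw [h0.isHermitian.eq] at hA
  rw [h1.isHermitian.eq] at hB
  have e : M - M * M = M * (1 - M) * M + (1 - M) * M * (1 - M) := by noncomm_ring
  have := congrArg Matrix.trace e
  rw [trace_sub, trace_add] at this
  linarith

/-- **Fantope curvature lemma (Vu–Cha–Lei).** Let `Ω = U diag(γ) Uᵀ` be a symmetric `d × d`
matrix with an orthonormal eigenbasis `U` and eigenvalues `γ` in descending order, let
`ℓ ∈ {1, …, d−1}` with eigengap `γ_ℓ − γ_{ℓ+1} > 0`, and let `Pi_ℓ = U diag(1_{i ≤ ℓ}) Uᵀ` be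
the orthogonal projection onto the span of the top-`ℓ` eigenvectors.  Then for every
symmetric `Λ` with `0 ⪯ Λ ⪯ I_d` and `trace Λ = ℓ`,
`(γ_ℓ − γ_{ℓ+1}) · ‖Pi_ℓ − Λ‖_F² ≤ 2 ⟨Ω, Pi_ℓ − Λ⟩`. -/
theorem stmt_16 {d : ℕ} (Om U : Matrix (Fin d) (Fin d) ℝ) (γ : Fin d → ℝ)
    (hU : Uᵀ * U = 1) (hγ : Antitone γ)
    (hOm : Om = U * Matrix.diagonal γ * Uᵀ)
    (ℓ : ℕ) (hℓ1 : 1 ≤ ℓ) (hℓd : ℓ < d)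
    (hgap : 0 < γ ⟨ℓ - 1, by omega⟩ - γ ⟨ℓ, hℓd⟩)
    (Proj : Matrix (Fin d) (Fin d) ℝ)
    (hPi : Proj = U * Matrix.diagonal (fun i : Fin d => if (i : ℕ) < ℓ then (1 : ℝ) else 0) * Uᵀ)
    (Λ : Matrix (Fin d) (Fin d) ℝ)
    (hΛpsd : Λ.PosSemidef) (hΛle : (1 - Λ).PosSemidef) (hΛtr : Λ.trace = (ℓ : ℝ)) :
    (γ ⟨ℓ - 1, by omega⟩ - γ ⟨ℓ, hℓd⟩) * (∑ i, ∑ j, (Proj i j - Λ i j) ^ 2) ≤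
      2 * Matrix.trace (Omᵀ * (Proj - Λ)) := by
  have hU' : U * Uᵀ = 1 := mul_eq_one_comm.mp hU
  set e : Fin d → ℝ := fun i => if (i : ℕ) < ℓ then (1 : ℝ) else 0 with he
  obtain ⟨M, hM⟩ : ∃ M, M = Uᵀ * Λ * U := ⟨_, rfl⟩
  have hΛ : Λ = U * M * Uᵀ := by
    calc Λ = (U * Uᵀ) * Λ * (U * Uᵀ) := by simp [hU']
      _ = U * M * Uᵀ := by rw [hM]; simp only [Matrix.mul_assoc]
  have hM0 : M.PosSemidef := by
    have := hΛpsd.conjTranspose_mul_mul_same U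
    rwa [conjTranspose_eq_transpose_of_trivial, ← hM] at this
  have hM1 : (1 - M).PosSemidef := by
    have := hΛle.conjTranspose_mul_mul_same U
    rwa [conjTranspose_eq_transpose_of_trivial, Matrix.mul_sub, Matrix.sub_mul, Matrix.mul_one,
      hU, ← hM] at this
  have hMtr : ∑ i, M i i = (ℓ : ℝ) := by
    have : M.trace = Λ.trace := by
      rw [hM, trace_mul_comm, ← Matrix.mul_assoc, hU', Matrix.one_mul]
    rw [hΛtr] at this
    exact this
  have hetr : ∑ i, e i = (ℓ : ℝ) := by
    rw [he, Finset.sum_boole, Fin.card_filter_val_lt, min_eq_right hℓd.le]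
  have hconj : ∀ A B : Matrix (Fin d) (Fin d) ℝ,
      ((U * A * Uᵀ) * (U * B * Uᵀ)).trace = (A * B).trace := by
    intro A B
    have : (U * A * Uᵀ) * (U * B * Uᵀ) = U * (A * (Uᵀ * U) * B * Uᵀ) := by
      simp only [Matrix.mul_assoc]
    rw [this, trace_mul_comm, hU, Matrix.mul_one, Matrix.mul_assoc, hU, Matrix.mul_one]
  have hdiff : Proj - Λ = U * (diagonal e - M) * Uᵀ := by
    rw [hPi, Matrix.mul_sub, Matrix.sub_mul, ← hΛ]
  have hinner : Matrix.trace (Omᵀ * (Proj - Λ)) = ∑ i, γ i * (e i - M i i) := by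
    have : Omᵀ = U * diagonal γ * Uᵀ := by
      rw [hOm]; simp [Matrix.transpose_mul, Matrix.mul_assoc]
    rw [this, hdiff, hconj]
    simp [Matrix.trace, Matrix.diagonal_mul]
  have hMT : Mᵀ = M := by
    have := hM0.isHermitian.eq
    rwa [conjTranspose_eq_transpose_of_trivial] at this
  have hsymm : (Proj - Λ)ᵀ = Proj - Λ := by
    rw [hdiff]; simp [Matrix.transpose_mul, Matrix.mul_assoc, hMT]
  have hfrob : ∑ i, ∑ j, (Proj i j - Λ i j) ^ 2 =
      ((diagonal e - M) * (diagonal e - M)).trace := by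
    rw [← hconj, ← hdiff]
    nth_rewrite 2 [← hsymm]
    simp [Matrix.trace, Matrix.mul_apply, sq]
  have hexp : ((diagonal e - M) * (diagonal e - M)).trace =
      ∑ i, (e i - 2 * (e i * M i i)) + (M * M).trace := by
    have h1 : (diagonal e - M) * (diagonal e - M) =
        diagonal e * diagonal e - diagonal e * M - M * diagonal e + M * M := by noncomm_ring
    rw [h1, trace_add, trace_sub, trace_sub, trace_mul_comm M (diagonal e)]
    congr 1
    simp only [Matrix.trace, Matrix.diag_apply, Matrix.diagonal_mul, Matrix.diagonal_apply_eq,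
      ← Finset.sum_sub_distrib]
    refine Finset.sum_congr rfl fun i _ => ?_
    have : e i * e i = e i := by simp only [he]; split_ifs <;> norm_num
    rw [this]; ring
  have hfle : ∑ i, ∑ j, (Proj i j - Λ i j) ^ 2 ≤ 2 * ∑ i, e i * (1 - M i i) := by
    have h2 : (M * M).trace ≤ (ℓ : ℝ) := (trace_sq_le_trace hM0 hM1).trans hMtr.le
    rw [hfrob, hexp]
    simp only [mul_sub, mul_one, Finset.sum_sub_distrib, ← Finset.mul_sum, hetr]
    linarith
  set a := γ ⟨ℓ - 1, by omega⟩ with ha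
  set b := γ ⟨ℓ, hℓd⟩ with hb
  -- Subtracting the multiple `b` of the vanishing total mass turns the bound into a termwise one.
  have hterm : ∀ i, (a - b) * (e i * (1 - M i i)) + b * (e i - M i i) ≤
      γ i * (e i - M i i) := by
    intro i
    have hm0 : 0 ≤ M i i := hM0.diag_nonneg
    have hm1 : 0 ≤ 1 - M i i := by simpa using hM1.diag_nonneg (i := i)
    by_cases hi : (i : ℕ) < ℓ
    · have hei : e i = 1 := by simp [he, hi]
      have hg : a ≤ γ i := hγ (by rw [Fin.le_def]; simp only; omega)
      rw [hei]
      nlinarith [mul_nonneg (sub_nonneg.mpr hg) hm1]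
    · have hei : e i = 0 := by simp [he, hi]
      have hg : γ i ≤ b := hγ (by rw [Fin.le_def]; simp only; omega)
      rw [hei]
      nlinarith [mul_nonneg (sub_nonneg.mpr hg) hm0]
  have hsum := Finset.sum_le_sum fun i (_ : i ∈ Finset.univ) => hterm i
  rw [Finset.sum_add_distrib, ← Finset.mul_sum, ← Finset.mul_sum, Finset.sum_sub_distrib, hetr,
    hMtr, sub_self, mul_zero, add_zero] at hsum
  rw [hinner]
  have := mul_le_mul_of_nonneg_left hfle hgap.le
  linarith
end

section
/- Let Y and Z be real random variables on a common probability space with E[Y⁴] ≤ M and E[Z⁴] ≤ M, and let τ > 0. Then |E[ψ_τ(Y)·ψ_τ(Z)] − E[Y·Z]| ≤ 2M·τ^{-2}. -/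
/-!
The bound holds pointwise before taking expectations: `|ψ_τ(y) ψ_τ(z) - y z| ≤ (y⁴ + z⁴) / τ²`
(`abs_trunc_mul_trunc_sub_le`). If `|y|, |z| ≤ τ` the left side vanishes; otherwise it is at most
`|y z| ≤ m²` with `m = max |y| |z| ≥ τ`, and `m² ≤ m⁴ / τ²`. Integrating gives the claim; the same
bound also yields integrability of the truncated product from that of `Y Z`.
-/

open MeasureTheory

/-- The truncation operator `ψ_τ(x) = sign(x) · min(|x|, τ)`. -/
noncomputable def trunc (τ x : ℝ) : ℝ := Real.sign x * min |x| τ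

/-- On `[-τ, τ]` truncation is the identity, and outside it is constant: it is the clamp to
`[-τ, τ]`. This form makes measurability evident. -/
lemma trunc_eq_clamp {τ : ℝ} (hτ : 0 < τ) (x : ℝ) : trunc τ x = max (-τ) (min x τ) := by
  unfold trunc
  rcases lt_trichotomy x 0 with h | h | h
  · rw [Real.sign_of_neg h, abs_of_neg h, min_eq_left (by linarith : x ≤ τ), neg_one_mul,
      ← max_neg_neg, neg_neg, max_comm]
  · subst h
    simp [hτ.le]
  · rw [Real.sign_of_pos h, abs_of_pos h, one_mul, max_eq_right]
    exact le_min (by linarith) (by linarith)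

/-- The product of truncations differs from the product only if `max |y| |z| > τ`, and then
`τ² |y z| ≤ (max |y| |z|)⁴`. -/
lemma abs_trunc_mul_trunc_sub_le {τ : ℝ} (hτ : 0 < τ) (y z : ℝ) :
    |trunc τ y * trunc τ z - y * z| ≤ (y ^ 4 + z ^ 4) / τ ^ 2 := by
  have sign_le : ∀ x : ℝ, |Real.sign x| ≤ 1 := fun x => by
    rcases Real.sign_apply_eq x with h | h | h <;> simp [h]
  have sign_mul : ∀ x : ℝ, Real.sign x * |x| = x := fun x => by
    rcases lt_trichotomy x 0 with h | h | h
    · simp [Real.sign_of_neg h, abs_of_neg h]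
    · simp [h]
    · simp [Real.sign_of_pos h, abs_of_pos h]
  have hfac : trunc τ y * trunc τ z - y * z =
      (Real.sign y * Real.sign z) * (min |y| τ * min |z| τ - |y| * |z|) := by
    unfold trunc
    linear_combination (Real.sign z * |z|) * sign_mul y + y * sign_mul z
  have hsign : |Real.sign y * Real.sign z| ≤ 1 := by
    rw [abs_mul]
    exact mul_le_one₀ (sign_le y) (abs_nonneg _) (sign_le z)
  have hy4 : y ^ 4 = |y| ^ 4 := (Even.pow_abs (by decide) y).symm
  have hz4 : z ^ 4 = |z| ^ 4 := (Even.pow_abs (by decide) z).symm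
  rw [hfac, abs_mul, hy4, hz4]
  refine (mul_le_of_le_one_left (abs_nonneg _) hsign).trans ?_
  have ha := abs_nonneg y
  have hb := abs_nonneg z
  clear hfac hsign hy4 hz4
  generalize |y| = a at *
  generalize |z| = b at *
  have hmin : min a τ * min b τ ≤ a * b :=
    mul_le_mul (min_le_left _ _) (min_le_left _ _) (le_min hb hτ.le) ha
  have hmin0 : 0 ≤ min a τ * min b τ := mul_nonneg (le_min ha hτ.le) (le_min hb hτ.le)
  rw [abs_of_nonpos (by linarith), le_div_iff₀ (by positivity)]
  by_cases h : a ≤ τ ∧ b ≤ τ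
  · rw [min_eq_left h.1, min_eq_left h.2]
    simp only [sub_self, neg_zero, zero_mul]
    positivity
  have key : ∀ u v : ℝ, 0 ≤ v → v ≤ u → τ ≤ u → u * v * τ ^ 2 ≤ u ^ 4 := by
    intro u v hv hvu hu
    calc u * v * τ ^ 2 ≤ u * u * u ^ 2 := by
          have : 0 ≤ u := hv.trans hvu
          gcongr
      _ = u ^ 4 := by ring
  have hab : a * b * τ ^ 2 ≤ a ^ 4 + b ^ 4 := by
    rcases le_total a b with hle | hle
    · have hτb : τ ≤ b := by
        by_contra! hlt
        exact h ⟨hle.trans hlt.le, hlt.le⟩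
      have := key b a ha hle hτb
      have : 0 ≤ a ^ 4 := by positivity
      rw [mul_comm a b]
      linarith
    · have hτa : τ ≤ a := by
        by_contra! hlt
        exact h ⟨hlt.le, hle.trans hlt.le⟩
      have := key a b hb hle hτa
      have : 0 ≤ b ^ 4 := by positivity
      linarith
  have := mul_nonneg hmin0 (sq_nonneg τ)
  linarith

/-- Truncation bias bound: if `E[Y⁴] ≤ M` and `E[Z⁴] ≤ M` then
`|E[ψ_τ(Y)·ψ_τ(Z)] − E[Y·Z]| ≤ 2M·τ⁻²`. -/
theorem stmt_17 {Ω : Type*} [MeasurableSpace Ω] (P : Measure Ω) [IsProbabilityMeasure P]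
    (Y Z : Ω → ℝ) (hY : AEMeasurable Y P) (hZ : AEMeasurable Z P)
    (M : ℝ) (hM : 0 < M)
    (hY4i : Integrable (fun ω => Y ω ^ 4) P) (hZ4i : Integrable (fun ω => Z ω ^ 4) P)
    (hY4 : ∫ ω, Y ω ^ 4 ∂P ≤ M) (hZ4 : ∫ ω, Z ω ^ 4 ∂P ≤ M)
    (τ : ℝ) (hτ : 0 < τ) :
    |(∫ ω, trunc τ (Y ω) * trunc τ (Z ω) ∂P) - ∫ ω, Y ω * Z ω ∂P| ≤ 2 * M / τ ^ 2 := by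
  have hdom : Integrable (fun ω => (Y ω ^ 4 + Z ω ^ 4) / τ ^ 2) P :=
    (hY4i.add hZ4i).div_const _
  have hYZ : Integrable (fun ω => Y ω * Z ω) P := by
    refine ((integrable_const (1 : ℝ)).add (hY4i.add hZ4i)).mono'
      (hY.mul hZ).aestronglyMeasurable (Filter.Eventually.of_forall fun ω => ?_)
    simp only [Pi.add_apply, Real.norm_eq_abs]
    rw [abs_le]
    constructor <;> nlinarith [sq_nonneg (Y ω - Z ω), sq_nonneg (Y ω + Z ω),
      sq_nonneg (Y ω ^ 2 - 1), sq_nonneg (Z ω ^ 2 - 1), sq_nonneg (Y ω ^ 2), sq_nonneg (Z ω ^ 2)]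
  have htrunc : Measurable (trunc τ) := by
    rw [funext (trunc_eq_clamp hτ)]
    fun_prop
  have hdiff : Integrable (fun ω => trunc τ (Y ω) * trunc τ (Z ω) - Y ω * Z ω) P :=
    hdom.mono' (((htrunc.comp_aemeasurable hY).mul (htrunc.comp_aemeasurable hZ)).sub
      (hY.mul hZ)).aestronglyMeasurable
      (Filter.Eventually.of_forall fun ω => abs_trunc_mul_trunc_sub_le hτ (Y ω) (Z ω))
  have hprod : Integrable (fun ω => trunc τ (Y ω) * trunc τ (Z ω)) P :=
    (hdiff.add hYZ).congr (Filter.Eventually.of_forall fun ω => by simp)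
  rw [← integral_sub hprod hYZ]
  calc |∫ ω, trunc τ (Y ω) * trunc τ (Z ω) - Y ω * Z ω ∂P|
      ≤ ∫ ω, |trunc τ (Y ω) * trunc τ (Z ω) - Y ω * Z ω| ∂P := abs_integral_le_integral_abs
    _ ≤ ∫ ω, (Y ω ^ 4 + Z ω ^ 4) / τ ^ 2 ∂P :=
        integral_mono hdiff.abs hdom fun ω => abs_trunc_mul_trunc_sub_le hτ (Y ω) (Z ω)
    _ = ((∫ ω, Y ω ^ 4 ∂P) + ∫ ω, Z ω ^ 4 ∂P) / τ ^ 2 := by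
        rw [integral_div, integral_add hY4i hZ4i]
    _ ≤ 2 * M / τ ^ 2 := by
        gcongr
        linarith
end

section
/- Let θ* ∈ ℝ^d have at most s nonzero entries, let v ∈ ℝ^d and λ > 0 satisfy ‖v − θ*‖_∞ ≤ λ/4, and let β̂ be a minimizer over ℝ^d of the function β ↦ ‖β‖₂² − 2⟨v, β⟩ + λ‖β‖₁. Then ‖β̂ − θ*‖₂ ≤ √s·λ and ‖β̂ − θ*‖₁ ≤ 4s·λ. -/
/-!
The objective is separable, so each `β̂ j` minimizes the scalar function
`x ↦ x² - 2 v_j x + λ|x|` (lemma `coord_min`). Comparing `β̂ j` with `0` shows that `β̂ j = 0`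
wherever `θ j = 0`; comparing it with the midpoint of `β̂ j` and `θ j` shows that
`|β̂ j - θ j| ≤ λ` everywhere. Hence the error is bounded by `λ` on the support of `θ`, which has
at most `s` elements, and vanishes off it, and both norm bounds follow by summation (the `ℓ₁`
bound even with constant `1` in place of `4`).
-/

open Finset

/-- A minimizer of a separable sum minimizes each summand. -/
lemma coord_min {ι : Type*} [Fintype ι] (f : ι → ℝ → ℝ) (β : ι → ℝ)
    (h : ∀ b : ι → ℝ, ∑ j, f j (β j) ≤ ∑ j, f j (b j)) (j : ι) (x : ℝ) :
    f j (β j) ≤ f j x := by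
  classical
  have h1 := h (Function.update β j x)
  rw [← Finset.add_sum_erase _ _ (Finset.mem_univ j),
    ← Finset.add_sum_erase _ (fun i => f i (Function.update β j x i)) (Finset.mem_univ j)] at h1
  have h2 : ∑ i ∈ Finset.univ.erase j, f i (Function.update β j x i)
      = ∑ i ∈ Finset.univ.erase j, f i (β i) :=
    Finset.sum_congr rfl fun i hi => by
      rw [Function.update_of_ne (Finset.ne_of_mem_erase hi)]
  rw [h2, Function.update_self] at h1
  exact le_of_add_le_add_right h1

lemma scalar_zero {v lam β : ℝ} (hlam : 0 < lam) (hv : |v| ≤ lam / 4)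
    (h : β ^ 2 - 2 * v * β + lam * |β| ≤ 0) : β = 0 := by
  have h1 : v * β ≤ lam / 4 * |β| :=
    (le_abs_self _).trans (by rw [abs_mul]; gcongr)
  have h2 : 0 ≤ lam * |β| := by positivity
  have h3 : β ^ 2 ≤ 0 := by linarith
  exact pow_eq_zero_iff two_ne_zero |>.1 (le_antisymm h3 (sq_nonneg β))

/-- Comparison with the midpoint of `β` and `θ`; comparison with `θ` itself would only give
the bound `3 / 2 * lam`. -/
lemma scalar_bound {v θ lam β : ℝ} (hlam : 0 < lam) (hv : |v - θ| ≤ lam / 4)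
    (h : β ^ 2 - 2 * v * β + lam * |β| ≤
      ((β + θ) / 2) ^ 2 - 2 * v * ((β + θ) / 2) + lam * |(β + θ) / 2|) :
    |β - θ| ≤ lam := by
  have h1 : (v - θ) * (β - θ) ≤ lam / 4 * |β - θ| :=
    (le_abs_self _).trans (by rw [abs_mul]; gcongr)
  have h2 : |(β + θ) / 2| - |β| ≤ |β - θ| / 2 := by
    have h3 := abs_sub_abs_le_abs_sub ((β + θ) / 2) β
    have h4 : |(β + θ) / 2 - β| = |β - θ| / 2 := by
      rw [show (β + θ) / 2 - β = -((β - θ) / 2) by ring, abs_neg, abs_div, abs_two]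
    linarith
  have h5 : lam * (|(β + θ) / 2| - |β|) ≤ lam * (|β - θ| / 2) := by gcongr
  have h6 : |β - θ| * |β - θ| ≤ lam * |β - θ| := by
    rw [abs_mul_abs_self]
    nlinarith
  by_contra! hc
  nlinarith [mul_pos (hlam.trans hc) (sub_pos.2 hc)]

/-- Deterministic analysis of the soft-thresholded least-squares program: if `θ*` has at most
`s` nonzero entries, `‖v − θ*‖_∞ ≤ λ/4`, and `β̂` minimizes
`β ↦ ‖β‖₂² − 2⟨v, β⟩ + λ‖β‖₁` over `ℝ^d`, then `‖β̂ − θ*‖₂ ≤ √s·λ` and `‖β̂ − θ*‖₁ ≤ 4sλ`. -/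
theorem stmt_19 {d : ℕ} (s : ℕ) (θ v : Fin d → ℝ)
    (hsparse : {j | θ j ≠ 0}.ncard ≤ s)
    (lam : ℝ) (hlam : 0 < lam)
    (hv : ∀ j, |v j - θ j| ≤ lam / 4)
    (βhat : Fin d → ℝ)
    (hmin : ∀ b : Fin d → ℝ,
      (∑ j, βhat j ^ 2) - 2 * (∑ j, v j * βhat j) + lam * (∑ j, |βhat j|) ≤
        (∑ j, b j ^ 2) - 2 * (∑ j, v j * b j) + lam * (∑ j, |b j|)) :
    Real.sqrt (∑ j, (βhat j - θ j) ^ 2) ≤ Real.sqrt s * lam ∧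
      (∑ j, |βhat j - θ j|) ≤ 4 * s * lam := by
  have hcoord : ∀ j x, βhat j ^ 2 - 2 * v j * βhat j + lam * |βhat j| ≤
      x ^ 2 - 2 * v j * x + lam * |x| := by
    refine coord_min (fun j x => x ^ 2 - 2 * v j * x + lam * |x|) βhat fun b => ?_
    simpa only [Finset.sum_add_distrib, Finset.sum_sub_distrib, Finset.mul_sum, mul_assoc]
      using hmin b
  have hbound : ∀ j, |βhat j - θ j| ≤ lam := fun j =>
    scalar_bound hlam (hv j) (hcoord j _)
  have hzero : ∀ j, θ j = 0 → βhat j - θ j = 0 := by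
    intro j hj
    have h1 := hv j
    rw [hj, sub_zero] at h1
    rw [hj, sub_zero]
    exact scalar_zero hlam h1 (by simpa using hcoord j 0)
  have hcard : ((univ.filter fun j => θ j ≠ 0).card : ℝ) ≤ s := by
    rw [← Set.ncard_coe_finset]
    simpa using hsparse
  -- A function bounded by `c` on the support of `θ` and vanishing off it has sum at most `s * c`.
  have hsum : ∀ (g : Fin d → ℝ) (c : ℝ), 0 ≤ c → (∀ j, g j ≤ c) → (∀ j, θ j = 0 → g j = 0) →
      ∑ j, g j ≤ s * c := by
    intro g c hc hg h0
    rw [← Finset.sum_filter_of_ne (p := fun j => θ j ≠ 0) fun j _ hj h => hj (h0 j h)]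
    refine (Finset.sum_le_card_nsmul _ _ c fun j _ => hg j).trans ?_
    rw [nsmul_eq_mul]
    gcongr
  constructor
  · have h2 := hsum (fun j => (βhat j - θ j) ^ 2) (lam ^ 2) (sq_nonneg _)
      (fun j => sq_le_sq.2 ((hbound j).trans (le_abs_self _)))
      (fun j hj => by simp [hzero j hj])
    refine (Real.sqrt_le_sqrt h2).trans_eq ?_
    rw [Real.sqrt_mul (Nat.cast_nonneg s), Real.sqrt_sq hlam.le]
  · have h1 := hsum (fun j => |βhat j - θ j|) lam hlam.le hbound
      (fun j hj => by simp [hzero j hj])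
    have h2 : 0 ≤ (s : ℝ) * lam := by positivity
    linarith
end
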